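/- The supremum of the set {(∑_{l=1}^{N−1} x_l)/(N−1) : N ≥ 2, 1 ≤ p ≤ ⌊N/2⌋, x feasible for (N,p)} equals the supremum of the set {α_Ñ/Ñ : Ñ ≥ 5 an integer}. -/

import Mathlib

open Real Finset

/-- `x : ℕ → ℝ` is a feasible vector for `(N, p)`. -/
def feasible (N p : ℕ) (x : ℕ → ℝ) : Prop :=
  (∀ l ∈ Finset.Icc 1 (N - 1), x l = 0 ∨ x l = 1) ∧
  (∀ l ∈ Finset.Icc 1 (N - 1), x l = x (N - l)) ∧
  (∀ k ∈ Finset.Icc 1 (N - 1),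
    ∑ l ∈ Finset.Icc 1 (N - 1),
      x l * Real.cos (2 * π * p * l / N) * (-1 + Real.cos (2 * π * k * l / N)) < 0)

/-- `s_k = ∑_{l=1}^{k} cos(2πl/Ñ)(-1 + cos(2πl/Ñ))`. -/
noncomputable def sseq (Nt k : ℕ) : ℝ :=
  ∑ l ∈ Finset.Icc 1 k, Real.cos (2 * π * l / Nt) * (-1 + Real.cos (2 * π * l / Nt))

/-- `k_c(Ñ)`: the least `k ∈ {1,…,Ñ-1}` with `s_k ≥ 0`. -/
noncomputable def kc (Nt : ℕ) : ℕ :=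
  sInf {k : ℕ | 1 ≤ k ∧ k ≤ Nt - 1 ∧ 0 ≤ sseq Nt k}

/-- `α_Ñ = 2k_c - 1 - 2 s_{k_c-1} / (s_{k_c} - s_{k_c-1})`. -/
noncomputable def alpha (Nt : ℕ) : ℝ :=
  2 * (kc Nt : ℝ) - 1
    - 2 * sseq Nt (kc Nt - 1) / (sseq Nt (kc Nt) - sseq Nt (kc Nt - 1))

lemma sum_cos_zero (n : ℕ) (hn : 0 < n) (k : ℤ) (hk : ¬ (n : ℤ) ∣ k) :
    ∑ l ∈ Finset.range n, Real.cos (2 * π * k * l / n) = 0 := by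
  have hn' : (n : ℂ) ≠ 0 := by exact_mod_cast hn.ne'
  set z : ℂ := Complex.exp (2 * π * Complex.I * k / n) with hz
  have hzn : z ^ n = 1 := by
    rw [hz, ← Complex.exp_nat_mul, Complex.exp_eq_one_iff]
    exact ⟨k, by field_simp⟩
  have hz1 : z ≠ 1 := by
    intro h
    rw [hz, Complex.exp_eq_one_iff] at h
    obtain ⟨m, hm⟩ := h
    apply hk
    refine ⟨m, ?_⟩
    have h2 : (2 * π * Complex.I : ℂ) ≠ 0 := Complex.two_pi_I_ne_zero
    have : (k : ℂ) = n * m := by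
      field_simp at hm
      apply mul_left_cancel₀ h2
      linear_combination (2 * π * Complex.I : ℂ) * hm
    exact_mod_cast this
  have hg : ∑ l ∈ Finset.range n, z ^ l = 0 := by
    have := mul_geom_sum z n
    rw [hzn, sub_self] at this
    rcases mul_eq_zero.mp this with h | h
    · exact absurd (sub_eq_zero.mp h) hz1
    · exact h
  have := congrArg Complex.re hg
  rw [Complex.re_sum, Complex.zero_re] at this
  rw [← this]
  apply Finset.sum_congr rfl
  intro l _
  rw [hz, ← Complex.exp_nat_mul]
  have : (l : ℂ) * (2 * π * Complex.I * k / n) = ((2 * π * k * l / n : ℝ) : ℂ) * Complex.I := by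
    push_cast; ring
  rw [this, Complex.exp_ofReal_mul_I_re]

lemma sum_range_mul' (F : ℕ → ℝ) (d n : ℕ) :
    ∑ l ∈ Finset.range (d * n), F l
      = ∑ m ∈ Finset.range d, ∑ j ∈ Finset.range n, F (n * m + j) := by
  induction d with
  | zero => simp
  | succ d ih =>
    rw [Finset.sum_range_succ, ← ih, Nat.succ_mul, Finset.sum_range_add]
    simp [mul_comm]

lemma cos_shift (n m j : ℕ) (hn : 0 < n) :
    Real.cos (2 * π * ((n * m + j : ℕ) : ℝ) / n) = Real.cos (2 * π * j / n) := by
  have hn' : (n : ℝ) ≠ 0 := by exact_mod_cast hn.ne'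
  have : 2 * π * ((n * m + j : ℕ) : ℝ) / n = 2 * π * j / n + m * (2 * π) := by
    push_cast; field_simp; ring
  rw [this, Real.cos_add_nat_mul_two_pi]

lemma cos_mod (n j : ℕ) (hn : 0 < n) :
    Real.cos (2 * π * (j : ℝ) / n) = Real.cos (2 * π * ((j % n : ℕ) : ℝ) / n) := by
  conv_lhs => rw [← Nat.div_add_mod j n]
  exact cos_shift n _ _ hn

lemma cos_refl (n j : ℕ) (hn : 0 < n) (hj : j ≤ n) :
    Real.cos (2 * π * ((n - j : ℕ) : ℝ) / n) = Real.cos (2 * π * j / n) := by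
  have hn' : (n : ℝ) ≠ 0 := by exact_mod_cast hn.ne'
  have : 2 * π * ((n - j : ℕ) : ℝ) / n = 2 * π - 2 * π * j / n := by
    rw [Nat.cast_sub hj]; field_simp
  rw [this, Real.cos_two_pi_sub]

lemma sum_symm (n k : ℕ) (H : ℕ → ℝ) (hk : 2 * k + 1 ≤ n)
    (hH : ∀ j, 1 ≤ j → j ≤ k → H (n - j) = H j) :
    ∑ j ∈ Finset.range n, H j
      = H 0 + 2 * ∑ j ∈ Finset.Icc 1 k, H j + ∑ j ∈ Finset.Ioo k (n - k), H j := by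
  induction k with
  | zero =>
    obtain ⟨n, rfl⟩ : ∃ n', n = n' + 1 := ⟨n - 1, by omega⟩
    have : Finset.range (n + 1) = insert 0 (Finset.Ioo 0 (n + 1)) := by
      ext j; simp only [Finset.mem_range, Finset.mem_insert, Finset.mem_Ioo]; omega
    rw [this, Finset.sum_insert (by simp)]
    simp
  | succ k ih =>
    rw [ih (by omega) (fun j h1 h2 => hH j h1 (by omega)),
      Finset.sum_Icc_succ_top (by omega)]
    have : Finset.Ioo k (n - k)
        = insert (k + 1) (insert (n - (k + 1)) (Finset.Ioo (k + 1) (n - (k + 1)))) := by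
      ext j; simp; omega
    rw [this, Finset.sum_insert (by simp; omega), Finset.sum_insert (by simp),
      hH (k + 1) (by omega) le_rfl]
    ring

/-- summand -/
noncomputable def ff (n j : ℕ) : ℝ :=
  Real.cos (2 * π * j / n) * (-1 + Real.cos (2 * π * j / n))

lemma ff_refl (n j : ℕ) (hn : 0 < n) (hj : j ≤ n) : ff n (n - j) = ff n j := by
  unfold ff; rw [cos_refl n j hn hj]

lemma ff_zero (n : ℕ) : ff n 0 = 0 := by simp [ff]

lemma sum_ff (n : ℕ) (hn : 5 ≤ n) : ∑ j ∈ Finset.range n, ff n j = n / 2 := by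
  have h1 := sum_cos_zero n (by omega) 1 (by
    intro h; have := Int.le_of_dvd (by norm_num) h; omega)
  have h2 := sum_cos_zero n (by omega) 2 (by
    intro h; have := Int.le_of_dvd (by norm_num) h; omega)
  have : ∀ j ∈ Finset.range n, ff n j = 1 / 2 + Real.cos (2 * π * (2 : ℤ) * j / n) / 2
      - Real.cos (2 * π * (1 : ℤ) * j / n) := by
    intro j _
    have e : 2 * π * (2 : ℤ) * j / n = 2 * (2 * π * j / n) := by push_cast; ring
    rw [e, Real.cos_two_mul]
    unfold ff
    push_cast
    ring_nf
  rw [Finset.sum_congr rfl this, Finset.sum_sub_distrib, Finset.sum_add_distrib,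
    ← Finset.sum_div (f := fun j : ℕ => Real.cos (2 * π * (2 : ℤ) * j / n)), h1, h2]
  simp
  ring

lemma sseq_eq (n k : ℕ) : sseq n k = ∑ j ∈ Finset.Icc 1 k, ff n j := rfl

lemma sseq_half (n : ℕ) (hn : 5 ≤ n) : 0 ≤ sseq n ((n - 1) / 2) := by
  have h := sum_symm n ((n - 1) / 2) (ff n) (by omega)
    (fun j h1 h2 => ff_refl n j (by omega) (by omega))
  rw [sum_ff n hn, ff_zero, ← sseq_eq] at h
  have hb : ∑ j ∈ Finset.Ioo ((n - 1) / 2) (n - (n - 1) / 2), ff n j ≤ 2 := by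
    have hle : ∀ j ∈ Finset.Ioo ((n - 1) / 2) (n - (n - 1) / 2), ff n j ≤ 2 := by
      intro j _
      unfold ff
      nlinarith [Real.neg_one_le_cos (2 * π * j / n), Real.cos_le_one (2 * π * j / n)]
    have := Finset.sum_le_card_nsmul _ _ _ hle
    refine this.trans ?_
    have hc : (Finset.Ioo ((n - 1) / 2) (n - (n - 1) / 2)).card ≤ 1 := by
      rw [Nat.card_Ioo]; omega
    have : ((Finset.Ioo ((n - 1) / 2) (n - (n - 1) / 2)).card : ℝ) ≤ 1 := by exact_mod_cast hc
    rw [nsmul_eq_mul]; linarith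
  have : (5 : ℝ) ≤ n := by exact_mod_cast hn
  linarith

lemma kc_facts (n : ℕ) (hn : 5 ≤ n) :
    2 ≤ kc n ∧ 2 * kc n + 1 ≤ n ∧ 0 ≤ sseq n (kc n) ∧ sseq n (kc n - 1) < 0 ∧
    sseq n (kc n) = sseq n (kc n - 1) + ff n (kc n) := by
  have hne : ({k : ℕ | 1 ≤ k ∧ k ≤ n - 1 ∧ 0 ≤ sseq n k}).Nonempty :=
    ⟨(n - 1) / 2, by omega, by omega, sseq_half n hn⟩
  have hmem : 1 ≤ kc n ∧ kc n ≤ n - 1 ∧ 0 ≤ sseq n (kc n) := Nat.sInf_mem hne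
  have hle : kc n ≤ (n - 1) / 2 := Nat.sInf_le ⟨by omega, by omega, sseq_half n hn⟩
  have hmin : ∀ k, 1 ≤ k → k < kc n → sseq n k < 0 := by
    intro k h1 h2
    by_contra! h3
    have : kc n ≤ k := Nat.sInf_le ⟨h1, by omega, h3⟩
    omega
  have h5 : (5 : ℝ) ≤ n := by exact_mod_cast hn
  have hs1 : sseq n 1 < 0 := by
    simp only [sseq, Finset.Icc_self, Finset.sum_singleton]
    have hlt : 2 * π * ((1 : ℕ) : ℝ) / n < π / 2 := by
      rw [div_lt_div_iff₀ (by linarith) (by norm_num)]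
      push_cast
      nlinarith [Real.pi_pos]
    have hpos : 0 < 2 * π * ((1 : ℕ) : ℝ) / n := by
      push_cast
      have := Real.pi_pos
      positivity
    have c1 : 0 < Real.cos (2 * π * ((1 : ℕ) : ℝ) / n) :=
      Real.cos_pos_of_mem_Ioo ⟨by linarith, hlt⟩
    have c2 : Real.cos (2 * π * ((1 : ℕ) : ℝ) / n) < 1 := by
      rw [← Real.cos_zero]
      exact Real.cos_lt_cos_of_nonneg_of_le_pi le_rfl (by linarith [Real.pi_pos]) hpos
    nlinarith
  have h2 : 2 ≤ kc n := by
    by_contra! h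
    have : kc n = 1 := by omega
    rw [this] at hmem
    linarith [hmem.2.2]
  refine ⟨h2, by omega, hmem.2.2, hmin _ (by omega) (by omega), ?_⟩
  obtain ⟨m, hm⟩ : ∃ m, kc n = m + 1 := ⟨kc n - 1, by omega⟩
  rw [hm, sseq_eq, Finset.sum_Icc_succ_top (by omega)]
  rfl

lemma kc_pos (n : ℕ) (hn : 5 ≤ n) :
    0 < ff n (kc n) ∧ Real.cos (2 * π * (kc n : ℝ) / n) < 0 := by
  obtain ⟨h1, h2, h3, h4, h5⟩ := kc_facts n hn
  have : 0 < ff n (kc n) := by linarith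
  refine ⟨this, ?_⟩
  unfold ff at this
  by_contra! h
  nlinarith [Real.cos_le_one (2 * π * (kc n : ℝ) / n)]

/-- fraction -/
noncomputable def tt (n : ℕ) : ℝ := - sseq n (kc n - 1) / ff n (kc n)

lemma alpha_eq (n : ℕ) (hn : 5 ≤ n) : alpha n = 2 * (kc n : ℝ) - 1 + 2 * tt n := by
  obtain ⟨h1, h2, h3, h4, h5⟩ := kc_facts n hn
  unfold alpha tt
  rw [h5]; ring

lemma tt_pos (n : ℕ) (hn : 5 ≤ n) : 0 < tt n := by
  obtain ⟨h1, h2, h3, h4, h5⟩ := kc_facts n hn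
  exact div_pos (by linarith) (kc_pos n hn).1

lemma tt_le (n : ℕ) (hn : 5 ≤ n) : tt n ≤ 1 := by
  obtain ⟨h1, h2, h3, h4, h5⟩ := kc_facts n hn
  unfold tt
  rw [div_le_one (kc_pos n hn).1]; linarith

lemma alpha_le (n : ℕ) (hn : 5 ≤ n) : alpha n ≤ n := by
  obtain ⟨h1, h2, h3, h4, h5⟩ := kc_facts n hn
  rw [alpha_eq n hn]
  have : (2 * kc n + 1 : ℝ) ≤ n := by exact_mod_cast h2
  linarith [tt_le n hn]

lemma cos_anti (n i j : ℕ) (hij : i ≤ j) (hj : 2 * j ≤ n) (hn : 0 < n) :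
    Real.cos (2 * π * (j : ℝ) / n) ≤ Real.cos (2 * π * (i : ℝ) / n) := by
  have hn' : (0 : ℝ) < n := by exact_mod_cast hn
  have hij' : (i : ℝ) ≤ j := by exact_mod_cast hij
  have hj' : (2 * j : ℝ) ≤ n := by exact_mod_cast hj
  have := Real.pi_pos
  apply Real.cos_le_cos_of_nonneg_of_le_pi
  · positivity
  · rw [div_le_iff₀ hn']; nlinarith
  · gcongr

lemma cos_mid (n k j : ℕ) (hkj : k ≤ j) (hj : j ≤ n - k) (_hk : 2 * k ≤ n) (hn : 0 < n) :
    Real.cos (2 * π * (j : ℝ) / n) ≤ Real.cos (2 * π * (k : ℝ) / n) := by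
  rcases le_total (2 * j) n with h | h
  · exact cos_anti n k j hkj h hn
  · rw [← cos_refl n j hn (by omega)]
    exact cos_anti n k (n - j) (by omega) (by omega) hn
lemma ff_le_kc (n : ℕ) (hn : 5 ≤ n) (j : ℕ) (hj : j ≤ kc n) : ff n j ≤ ff n (kc n) := by
  obtain ⟨h1, h2, h3, h4, h5⟩ := kc_facts n hn
  obtain ⟨hp, hc⟩ := kc_pos n hn
  have := cos_anti n j (kc n) hj (by omega) (by omega)
  have h1' := Real.cos_le_one (2 * π * (j : ℝ) / n)
  rcases le_or_gt 0 (Real.cos (2 * π * (j : ℝ) / n)) with h | h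
  · have : ff n j ≤ 0 := by unfold ff; nlinarith
    linarith
  · unfold ff; nlinarith

lemma kc_le_ff (n : ℕ) (hn : 5 ≤ n) (j : ℕ) (hj : kc n ≤ j) (hj2 : j ≤ n - kc n) :
    ff n (kc n) ≤ ff n j := by
  obtain ⟨h1, h2, h3, h4, h5⟩ := kc_facts n hn
  obtain ⟨hp, hc⟩ := kc_pos n hn
  have := cos_mid n (kc n) j hj hj2 (by omega) (by omega)
  unfold ff; nlinarith

lemma sum_mul_coprime (n q : ℕ) (hn : 0 < n) (hq : Nat.Coprime q n) (F : ℕ → ℝ)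
    (hF : ∀ j, F j = F (j % n)) :
    ∑ j ∈ Finset.range n, F (q * j) = ∑ j ∈ Finset.range n, F j := by
  have hmaps : ∀ j ∈ Finset.range n, (q * j) % n ∈ Finset.range n := fun j _ =>
    Finset.mem_range.mpr (Nat.mod_lt _ hn)
  have hinj : Set.InjOn (fun j => (q * j) % n) (Finset.range n : Set ℕ) := by
    intro a ha b hb hab
    have ha' : a < n := by simpa using ha
    have hb' : b < n := by simpa using hb
    have h : q * a ≡ q * b [MOD n] := hab
    have h' := Nat.ModEq.cancel_left_of_coprime (by rw [Nat.gcd_comm]; exact hq) h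
    have h'' : a % n = b % n := h'
    rwa [Nat.mod_eq_of_lt ha', Nat.mod_eq_of_lt hb'] at h''
  have hsurj := Finset.surjOn_of_injOn_of_card_le (fun j => (q * j) % n) (s := Finset.range n)
    (t := Finset.range n) (fun j hj => hmaps j hj) hinj le_rfl
  exact Finset.sum_nbij (fun j => (q * j) % n) hmaps hinj hsurj (fun j _ => hF _)

lemma sum_range_Icc (N : ℕ) (hN : 1 ≤ N) (F : ℕ → ℝ) :
    ∑ l ∈ Finset.range N, F l = F 0 + ∑ l ∈ Finset.Icc 1 (N - 1), F l := by
  have : Finset.range N = insert 0 (Finset.Icc 1 (N - 1)) := by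
    ext j; simp only [Finset.mem_range, Finset.mem_insert, Finset.mem_Icc]; omega
  rw [this, Finset.sum_insert (by simp)]

lemma small_ff (n j : ℕ) (hn : 1 ≤ n) (hn4 : n ≤ 4) : 0 ≤ ff n j := by
  unfold ff
  rw [cos_mod n j hn]
  have hlt := Nat.mod_lt j hn
  generalize j % n = r at hlt
  have key : Real.cos (2 * π * r / n) ≤ 0 ∨ Real.cos (2 * π * r / n) = 1 := by
    rcases Nat.eq_zero_or_pos r with h0 | h0
    · right; simp [h0]
    · left
      have hn' : (0 : ℝ) < n := by exact_mod_cast hn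
      have h1 : (1 : ℝ) ≤ r := by exact_mod_cast h0
      have h2 : (r : ℝ) + 1 ≤ n := by exact_mod_cast hlt
      have h3 : (n : ℝ) ≤ 4 := by exact_mod_cast hn4
      have := Real.pi_pos
      apply Real.cos_nonpos_of_pi_div_two_le_of_le
      · rw [div_le_div_iff₀ (by norm_num) hn']; nlinarith
      · rw [div_le_iff₀ hn']; nlinarith
  rcases key with h | h
  · nlinarith [Real.cos_le_one (2 * π * r / n)]
  · rw [h]; norm_num

lemma upper (N p : ℕ) (x : ℕ → ℝ) (hN : 2 ≤ N) (hp : 1 ≤ p) (hpN : p ≤ N / 2)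
    (hx : feasible N p x) :
    ∃ n : ℕ, 5 ≤ n ∧ (∑ l ∈ Finset.Icc 1 (N - 1), x l) / ((N : ℝ) - 1) ≤ alpha n / n := by
  obtain ⟨hx1, -, hx3⟩ := hx
  obtain ⟨d, n, q, hd, hNd, hpd, hq⟩ : ∃ d n q : ℕ, 0 < d ∧ N = d * n ∧ p = d * q ∧
      Nat.Coprime q n := by
    have hg : 0 < Nat.gcd p N := Nat.gcd_pos_of_pos_left _ hp
    refine ⟨Nat.gcd p N, N / Nat.gcd p N, p / Nat.gcd p N, hg, ?_, ?_,
      Nat.coprime_div_gcd_div_gcd hg⟩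
    · exact (Nat.mul_div_cancel' (Nat.gcd_dvd_right p N)).symm
    · exact (Nat.mul_div_cancel' (Nat.gcd_dvd_left p N)).symm
  have hn0 : 0 < n := by
    rcases Nat.eq_zero_or_pos n with h | h
    · subst h; omega
    · exact h
  have hdR : (0 : ℝ) < d := by exact_mod_cast hd
  have hnR : (0 : ℝ) < n := by exact_mod_cast hn0
  have hcos : ∀ l : ℕ, Real.cos (2 * π * p * l / N) = Real.cos (2 * π * ((q * l : ℕ) : ℝ) / n) := by
    intro l
    congr 1
    rw [hNd, hpd]; push_cast; field_simp
  have hk := hx3 p (Finset.mem_Icc.mpr ⟨hp, by omega⟩)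
  have hk' : ∑ l ∈ Finset.Icc 1 (N - 1), x l * ff n (q * l) < 0 := by
    refine lt_of_eq_of_lt (Finset.sum_congr rfl ?_) hk
    intro l _
    rw [hcos l]; unfold ff; ring
  have hn5 : 5 ≤ n := by
    by_contra! h
    have : 0 ≤ ∑ l ∈ Finset.Icc 1 (N - 1), x l * ff n (q * l) := by
      apply Finset.sum_nonneg
      intro l hl
      have := small_ff n (q * l) hn0 (by omega)
      rcases hx1 l hl with h | h <;> rw [h] <;> linarith
    linarith
  refine ⟨n, hn5, ?_⟩
  obtain ⟨h1, h2, h3, h4, h5⟩ := kc_facts n hn5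
  obtain ⟨hpos, hc⟩ := kc_pos n hn5
  set f := ff n (kc n) with hf
  set G : ℕ → ℝ := fun j => max (1 - ff n j / f) 0 with hG
  have hGmod : ∀ j, G j = G (j % n) := by
    intro j
    simp only [hG, ff]
    rw [cos_mod n j hn0]
  have hG0 : G 0 = 1 := by simp [hG, ff_zero]
  have hsum1 : ∑ l ∈ Finset.Icc 1 (N - 1), x l ≤ ∑ l ∈ Finset.Icc 1 (N - 1), G (q * l) := by
    have e : ∑ l ∈ Finset.Icc 1 (N - 1), (x l - (x l * ff n (q * l)) / f)
        ≤ ∑ l ∈ Finset.Icc 1 (N - 1), G (q * l) := by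
      apply Finset.sum_le_sum
      intro l hl
      rcases hx1 l hl with h | h
      · rw [h]; simp [hG]
      · rw [h]; simp [hG]
    rw [Finset.sum_sub_distrib, ← Finset.sum_div] at e
    have := div_neg_of_neg_of_pos hk' hpos
    linarith
  have hsum2 : ∑ l ∈ Finset.range N, G (q * l) = d * ∑ j ∈ Finset.range n, G j := by
    rw [hNd, sum_range_mul']
    rw [← sum_mul_coprime n q hn0 hq G hGmod]
    rw [Finset.sum_congr rfl (g := fun _ => ∑ j ∈ Finset.range n, G (q * j))]
    · simp
    · intro m _
      apply Finset.sum_congr rfl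
      intro j _
      rw [hGmod, hGmod (q * j)]
      congr 1
      rw [mul_add, show q * (n * m) = n * (q * m) by ring, Nat.mul_add_mod]
  have hsum3 : ∑ j ∈ Finset.range n, G j = alpha n := by
    rw [sum_symm n (kc n - 1) G (by omega)
      (fun j _ _ => by simp only [hG]; rw [ff_refl n j hn0 (by omega)])]
    have z : ∑ j ∈ Finset.Ioo (kc n - 1) (n - (kc n - 1)), G j = 0 := by
      apply Finset.sum_eq_zero
      intro j hj
      rw [Finset.mem_Ioo] at hj
      have := kc_le_ff n hn5 j (by omega) (by omega)
      apply max_eq_right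
      have : 1 ≤ ff n j / f := by rw [le_div_iff₀ hpos]; linarith
      linarith
    have w : ∑ j ∈ Finset.Icc 1 (kc n - 1), G j = ((kc n : ℝ) - 1) - sseq n (kc n - 1) / f := by
      rw [Finset.sum_congr rfl (g := fun j => 1 - ff n j / f)]
      · rw [Finset.sum_sub_distrib, ← Finset.sum_div, ← sseq_eq]
        simp
        rw [Nat.cast_sub (by omega)]; simp
      · intro j hj
        rw [Finset.mem_Icc] at hj
        apply max_eq_left
        have := ff_le_kc n hn5 j (by omega)
        have : ff n j / f ≤ 1 := by rw [div_le_one hpos]; exact this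
        linarith
    rw [z, w, hG0, alpha_eq n hn5, tt]
    ring
  have hsum4 := sum_range_Icc N (by omega) (fun l => G (q * l))
  simp only [mul_zero, hG0] at hsum4
  have hfin : ∑ l ∈ Finset.Icc 1 (N - 1), x l ≤ d * alpha n - 1 := by
    rw [← hsum3, ← hsum2, hsum4]; linarith
  have hN' : (N : ℝ) = d * n := by rw [hNd]; push_cast; ring
  have hN2 : (2 : ℝ) ≤ N := by exact_mod_cast hN
  rw [div_le_div_iff₀ (by linarith) hnR]
  have := alpha_le n hn5
  calc _ ≤ (d * alpha n - 1) * n := by gcongr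
    _ ≤ _ := by rw [hN']; nlinarith
/-- membership predicate of the construction -/
def PP (n k D a m j : ℕ) : Prop :=
  (j < k ∨ n - k < j) ∨ ((j = k ∨ j = n - k) ∧ a ≤ m ∧ m < D - a)

open Classical in
/-- the vector of the construction -/
noncomputable def xx (n k D a l : ℕ) : ℝ := if PP n k D a (l / n) (l % n) then 1 else 0

lemma xx_sum (n k D a : ℕ) (hk : 1 ≤ k) (hkn : 2 * k + 1 ≤ n) (ha : 2 * a ≤ D) (G : ℕ → ℝ)
    (hG : ∀ j, 1 ≤ j → j ≤ k → G (n - j) = G j) :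
    ∑ l ∈ Finset.range (D * n), xx n k D a l * G (l % n)
      = D * (G 0 + 2 * ∑ j ∈ Finset.Icc 1 (k - 1), G j) + ((D : ℝ) - 2 * a) * (2 * G k) := by
  classical
  rw [sum_range_mul']
  have hm : ∀ m ∈ Finset.range D, ∑ j ∈ Finset.range n, xx n k D a (n * m + j) * G ((n * m + j) % n)
      = (G 0 + 2 * ∑ j ∈ Finset.Icc 1 (k - 1), G j)
        + (if a ≤ m ∧ m < D - a then 1 else 0) * (2 * G k) := by
    intro m _
    rw [Finset.sum_congr rfl
      (g := fun j => (if PP n k D a m j then (1 : ℝ) else 0) * G j)]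
    swap
    · intro j hj
      have hj := Finset.mem_range.mp hj
      have e1 : (n * m + j) % n = j := by rw [Nat.mul_add_mod, Nat.mod_eq_of_lt hj]
      have e2 : (n * m + j) / n = m := by
        rw [Nat.mul_add_div (by omega), Nat.div_eq_of_lt hj]; omega
      simp only [xx, e1, e2]
    rw [sum_symm n k _ hkn]
    swap
    · intro j h1 h2
      rw [hG j h1 h2]
      congr 1
      apply if_congr _ rfl rfl
      unfold PP
      omega
    rw [Finset.sum_eq_zero (s := Finset.Ioo k (n - k))]
    swap
    · intro j hj
      rw [Finset.mem_Ioo] at hj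
      rw [if_neg, zero_mul]
      unfold PP; omega
    obtain ⟨k, rfl⟩ : ∃ k', k = k' + 1 := ⟨k - 1, by omega⟩
    rw [Finset.sum_Icc_succ_top (by omega)]
    rw [Finset.sum_congr rfl (s₁ := Finset.Icc 1 k) (g := fun j => G j)]
    swap
    · intro j hj
      rw [Finset.mem_Icc] at hj
      rw [if_pos, one_mul]
      unfold PP; omega
    rw [if_pos (show PP n (k + 1) D a m 0 by unfold PP; omega)]
    have : PP n (k + 1) D a m (k + 1) ↔ (a ≤ m ∧ m < D - a) := by unfold PP; omega
    simp only [this]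
    split_ifs <;> simp <;> ring
  rw [Finset.sum_congr rfl hm, Finset.sum_add_distrib, ← Finset.sum_mul, Finset.sum_boole]
  have : ((Finset.range D).filter (fun m => a ≤ m ∧ m < D - a)) = Finset.Ico a (D - a) := by
    ext m; simp; omega
  rw [this, Nat.card_Ico, Nat.cast_sub (by omega), Nat.cast_sub (by omega)]
  simp
  ring

lemma xx_symm (n k D a l : ℕ) (hk : 1 ≤ k) (hkn : 2 * k + 1 ≤ n) (hl : 1 ≤ l)
    (hl2 : l ≤ D * n - 1) : xx n k D a l = xx n k D a (D * n - l) := by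
  classical
  have hn : 0 < n := by omega
  obtain ⟨m, j, hj, rfl⟩ : ∃ m j, j < n ∧ l = n * m + j :=
    ⟨l / n, l % n, Nat.mod_lt _ hn, (Nat.div_add_mod l n).symm⟩
  have hmD : m < D := by
    by_contra! h
    have : D * n ≤ n * m := by rw [mul_comm]; exact Nat.mul_le_mul_left n h
    omega
  obtain ⟨e, rfl⟩ : ∃ e, D = m + 1 + e := ⟨D - (m + 1), by omega⟩
  have e1 : (n * m + j) % n = j := by rw [Nat.mul_add_mod, Nat.mod_eq_of_lt hj]
  have e2 : (n * m + j) / n = m := by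
    rw [Nat.mul_add_div (by omega), Nat.div_eq_of_lt hj]; omega
  unfold xx
  apply if_congr _ rfl rfl
  rw [e1, e2]
  rcases Nat.eq_zero_or_pos j with h0 | h0
  · have : ((m + 1 + e) * n - (n * m + j)) = n * (e + 1) + 0 := by
      have : (m + 1 + e) * n = n * m + n * (e + 1) := by ring
      omega
    rw [this, Nat.mul_add_mod, Nat.zero_mod]
    unfold PP; omega
  · have : ((m + 1 + e) * n - (n * m + j)) = n * e + (n - j) := by
      have : (m + 1 + e) * n = n * m + (n * e + n) := by ring
      omega
    have hj' : n - j < n := by omega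
    rw [this, Nat.mul_add_mod, Nat.mod_eq_of_lt hj', Nat.mul_add_div (by omega),
      Nat.div_eq_of_lt hj']
    unfold PP; omega

lemma xx_01 (n k D a l : ℕ) : xx n k D a l = 0 ∨ xx n k D a l = 1 := by
  classical
  unfold xx
  split_ifs <;> simp

lemma cos_lt_one_of (N k l : ℕ) (hN : 0 < N) (h : ¬ N ∣ k * l) :
    Real.cos (2 * π * k * l / N) < 1 := by
  have hN' : (N : ℝ) ≠ 0 := by exact_mod_cast hN.ne'
  refine lt_of_le_of_ne (Real.cos_le_one _) ?_
  intro h1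
  obtain ⟨m, hm⟩ := (Real.cos_eq_one_iff _).mp h1
  apply h
  have : (k * l : ℝ) = N * m := by
    field_simp at hm
    linarith
  have : ((k * l : ℕ) : ℤ) = N * m := by exact_mod_cast this
  exact Int.natCast_dvd_natCast.mp ⟨m, this⟩

lemma xx_feasible (n D a : ℕ) (hn : 5 ≤ n) (ha : 1 ≤ a) (haD : 2 * a ≤ D)
    (hr : (D : ℝ) - 2 * a < tt n * D) : feasible (D * n) D (xx n (kc n) D a) := by
  classical
  obtain ⟨h1, h2, h3, h4, h5⟩ := kc_facts n hn
  obtain ⟨hpos, hc⟩ := kc_pos n hn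
  have hn0 : 0 < n := by omega
  have hD0 : 0 < D := by omega
  have hDR : (0 : ℝ) < D := by exact_mod_cast hD0
  have hnR : (0 : ℝ) < n := by exact_mod_cast hn0
  have hN0 : 0 < D * n := Nat.mul_pos hD0 hn0
  have hcast : ((D * n : ℕ) : ℝ) = D * n := by push_cast; ring
  have hcos : ∀ l : ℕ, Real.cos (2 * π * D * l / (D * n : ℕ)) = Real.cos (2 * π * (l : ℝ) / n) := by
    intro l
    congr 1
    push_cast; field_simp
  refine ⟨fun l _ => xx_01 _ _ _ _ _, fun l hl => ?_, ?_⟩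
  · rw [Finset.mem_Icc] at hl
    exact xx_symm n (kc n) D a l (by omega) h2 hl.1 hl.2
  intro k hk
  rw [Finset.mem_Icc] at hk
  have hred := sum_range_Icc (D * n) hN0 (fun l => xx n (kc n) D a l *
    Real.cos (2 * π * D * l / (D * n : ℕ)) * (-1 + Real.cos (2 * π * k * l / (D * n : ℕ))))
  simp only [Nat.cast_zero, mul_zero, zero_div, Real.cos_zero, neg_add_cancel, zero_add] at hred
  rw [← hred]
  simp only [hcos]
  by_cases hkD : k = D ∨ k = D * n - D
  · have hcos2 : ∀ l : ℕ, Real.cos (2 * π * k * l / (D * n : ℕ)) = Real.cos (2 * π * (l : ℝ) / n) := by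
      intro l
      rcases hkD with h | h
      · rw [h, hcos]
      · have : 2 * π * k * l / (D * n : ℕ) = l * (2 * π) - 2 * π * (l : ℝ) / n := by
          rw [h, Nat.cast_sub (Nat.le_mul_of_pos_right D hn0)]
          push_cast; field_simp
        rw [this, Real.cos_nat_mul_two_pi_sub]
    have hs := xx_sum n (kc n) D a (by omega) h2 haD (ff n)
      (fun j _ _ => ff_refl n j hn0 (by omega))
    rw [Finset.sum_congr rfl (g := fun l => xx n (kc n) D a l * ff n (l % n))]
    · rw [hs, ff_zero, ← sseq_eq]
      have ht : tt n * ff n (kc n) = - sseq n (kc n - 1) := by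
        unfold tt; field_simp
      nlinarith [mul_lt_mul_of_pos_right hr hpos]
    · intro l _
      rw [hcos2]
      unfold ff
      rw [← cos_mod n l hn0]; ring
  · push Not at hkD
    have hz : ∑ l ∈ Finset.range (D * n), Real.cos (2 * π * (l : ℝ) / n) *
        (-1 + Real.cos (2 * π * k * l / (D * n : ℕ))) = 0 := by
      have z1 := sum_cos_zero (D * n) hN0 (D : ℤ) (by
        intro h
        have := Nat.le_of_dvd hD0 (Int.natCast_dvd_natCast.mp h)
        nlinarith)
      have z2 := sum_cos_zero (D * n) hN0 ((k : ℤ) + D) (by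
        intro h
        have h' : (D * n) ∣ k + D := by exact_mod_cast h
        obtain ⟨c, hc⟩ := h'
        have hDn : D * 5 ≤ D * n := Nat.mul_le_mul_left D hn
        have c1 : c = 1 := by
          have : c < 2 := by
            by_contra! h
            have := Nat.mul_le_mul_left (D * n) h
            omega
          interval_cases c
          · omega
          · rfl
        subst c1
        omega)
      have z3 := sum_cos_zero (D * n) hN0 ((k : ℤ) - D) (by
        intro h
        have hDn : D * 5 ≤ D * n := Nat.mul_le_mul_left D hn
        have : |(k : ℤ) - D| < (D * n : ℕ) := by
          rw [abs_lt]; constructor <;> omega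
        have := Int.eq_zero_of_abs_lt_dvd h this
        omega)
      rw [Finset.sum_congr rfl (g := fun l : ℕ =>
        (Real.cos (2 * π * ((k : ℤ) + D : ℤ) * l / (D * n : ℕ))
          + Real.cos (2 * π * ((k : ℤ) - D : ℤ) * l / (D * n : ℕ))) / 2
          - Real.cos (2 * π * (D : ℤ) * l / (D * n : ℕ)))]
      · rw [Finset.sum_sub_distrib, ← Finset.sum_div, Finset.sum_add_distrib, z1, z2, z3]
        norm_num
      · intro l _
        rw [← hcos l]
        have e1 : 2 * π * ((k : ℤ) + D : ℤ) * l / (D * n : ℕ)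
            = 2 * π * k * l / (D * n : ℕ) + 2 * π * D * l / (D * n : ℕ) := by
          push_cast; ring
        have e2 : 2 * π * ((k : ℤ) - D : ℤ) * l / (D * n : ℕ)
            = 2 * π * k * l / (D * n : ℕ) - 2 * π * D * l / (D * n : ℕ) := by
          push_cast; ring
        rw [e1, e2, Real.cos_add, Real.cos_sub, Int.cast_natCast]
        ring
    have hneg : ∀ l : ℕ, xx n (kc n) D a l ≠ 1 → xx n (kc n) D a l = 0 ∧
        Real.cos (2 * π * (l : ℝ) / n) < 0 := by
      intro l hl
      refine ⟨(xx_01 _ _ _ _ _).resolve_right hl, ?_⟩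
      have hP : ¬ PP n (kc n) D a (l / n) (l % n) := by
        intro h; apply hl; unfold xx; rw [if_pos h]
      have hb : kc n ≤ l % n ∧ l % n ≤ n - kc n := by
        unfold PP at hP; omega
      rw [cos_mod n l hn0]
      exact lt_of_le_of_lt (cos_mid n (kc n) _ hb.1 hb.2 (by omega) hn0) hc
    obtain ⟨l₀, hl₀, hx₀, hdvd⟩ : ∃ l₀, l₀ < D * n ∧ xx n (kc n) D a l₀ ≠ 1 ∧
        ¬ (D * n) ∣ k * l₀ := by
      have hnD : n ≤ D * n := Nat.le_mul_of_pos_left n hD0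
      have hx : ∀ l, kc n ≤ l → l ≤ n - kc n → xx n (kc n) D a l ≠ 1 := by
        intro l hl1 hl2
        unfold xx
        rw [Nat.div_eq_of_lt (by omega), Nat.mod_eq_of_lt (by omega), if_neg]
        · norm_num
        · unfold PP; omega
      by_cases hd : (D * n) ∣ k * kc n
      · refine ⟨kc n + 1, by omega, hx _ (by omega) (by omega), ?_⟩
        intro hd2
        rw [mul_add, mul_one] at hd2
        have := (Nat.dvd_add_right hd).mp hd2
        have := Nat.le_of_dvd (by omega) this
        omega
      · exact ⟨kc n, by omega, hx _ le_rfl (by omega), hd⟩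
    have hlt : ∑ l ∈ Finset.range (D * n), xx n (kc n) D a l * Real.cos (2 * π * (l : ℝ) / n) *
          (-1 + Real.cos (2 * π * k * l / (D * n : ℕ)))
        < ∑ l ∈ Finset.range (D * n), Real.cos (2 * π * (l : ℝ) / n) *
          (-1 + Real.cos (2 * π * k * l / (D * n : ℕ))) := by
      apply Finset.sum_lt_sum
      · intro l _
        by_cases h : xx n (kc n) D a l = 1
        · rw [h, one_mul]
        · obtain ⟨h0, hcn⟩ := hneg l h
          rw [h0]
          nlinarith [Real.cos_le_one (2 * π * k * l / (D * n : ℕ))]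
      · refine ⟨l₀, Finset.mem_range.mpr hl₀, ?_⟩
        obtain ⟨h0, hcn⟩ := hneg l₀ hx₀
        rw [h0]
        have := cos_lt_one_of (D * n) k l₀ hN0 hdvd
        nlinarith
    rw [hz] at hlt
    exact hlt

lemma lower (n : ℕ) (hn : 5 ≤ n) (ε : ℝ) (hε : 0 < ε) :
    ∃ (N p : ℕ) (x : ℕ → ℝ), 2 ≤ N ∧ 1 ≤ p ∧ p ≤ N / 2 ∧ feasible N p x ∧
      alpha n / n - ε ≤ (∑ l ∈ Finset.Icc 1 (N - 1), x l) / ((N : ℝ) - 1) := by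
  obtain ⟨h1, h2, h3, h4, h5⟩ := kc_facts n hn
  have ht0 := tt_pos n hn
  have ht1 := tt_le n hn
  obtain ⟨D, hD⟩ := exists_nat_gt (max (max 2 (2 / tt n)) (5 / ε))
  have hD2 : (2 : ℝ) < D := lt_of_le_of_lt ((le_max_left _ _).trans (le_max_left _ _)) hD
  have hDt : 2 / tt n < D := lt_of_le_of_lt ((le_max_right _ _).trans (le_max_left _ _)) hD
  have hDε : 5 / ε < D := lt_of_le_of_lt (le_max_right _ _) hD
  rw [div_lt_iff₀ ht0] at hDt
  rw [div_lt_iff₀ hε] at hDε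
  set a := ⌊(1 - tt n) * D / 2⌋₊ + 1 with ha
  have hnn : 0 ≤ (1 - tt n) * D / 2 := by
    have : 0 ≤ 1 - tt n := by linarith
    positivity
  have ha1 : (a : ℝ) ≤ (1 - tt n) * D / 2 + 1 := by
    rw [ha]; push_cast
    linarith [Nat.floor_le hnn]
  have ha2 : (1 - tt n) * D / 2 < a := by
    rw [ha]; push_cast
    exact Nat.lt_floor_add_one _
  have haD : 2 * a ≤ D := by
    have : (2 * a : ℝ) ≤ D := by nlinarith
    exact_mod_cast this
  have hD0 : 2 < D := by exact_mod_cast hD2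
  have hNn : D * 5 ≤ D * n := Nat.mul_le_mul_left D hn
  refine ⟨D * n, D, xx n (kc n) D a, by omega, by omega, by omega,
    xx_feasible n D a hn (by omega) haD (by linarith), ?_⟩
  have hs := xx_sum n (kc n) D a (by omega) h2 haD (fun _ => 1) (fun _ _ _ => rfl)
  simp only [mul_one] at hs
  rw [sum_range_Icc (D * n) (by omega)] at hs
  have hx0 : xx n (kc n) D a 0 = 1 := by
    unfold xx
    rw [if_pos]
    unfold PP
    left; left
    rw [Nat.zero_mod]; omega
  rw [hx0] at hs
  simp at hs
  rw [Nat.cast_sub (by omega)] at hs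
  push_cast at hs ⊢
  have hα := alpha_eq n hn
  have hk2 : (2 : ℝ) ≤ kc n := by exact_mod_cast h1
  have hS : D * alpha n - 5 ≤ ∑ l ∈ Finset.Icc 1 (D * n - 1), xx n (kc n) D a l := by
    rw [hα]; nlinarith
  have hn5 : (5 : ℝ) ≤ n := by exact_mod_cast hn
  have hDn : (1 : ℝ) < D * n := by nlinarith
  have hα3 : 3 ≤ alpha n := by rw [hα]; linarith
  calc alpha n / n - ε ≤ (D * alpha n - 5) / (D * n) := by
        rw [sub_le_iff_le_add, div_add' _ _ _ (by linarith), div_le_div_iff₀ (by linarith) (by linarith)]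
        have : 0 ≤ (ε * D * n - 5) * n := by
          apply mul_nonneg _ (by linarith)
          nlinarith
        nlinarith
    _ ≤ (D * alpha n - 5) / (D * n - 1) := by
        apply div_le_div_of_nonneg_left
        · nlinarith
        · linarith
        · linarith
    _ ≤ _ := by
        apply div_le_div_of_nonneg_right hS
        linarith

/-- The supremum of the connectivities of feasible vectors, over all `N ≥ 2` and
`1 ≤ p ≤ ⌊N/2⌋`, equals the supremum of `{α_Ñ/Ñ : Ñ ≥ 5}`. -/
theorem sup_connectivity_eq_sup_alpha :
    sSup {μ : ℝ | ∃ (N p : ℕ) (x : ℕ → ℝ), 2 ≤ N ∧ 1 ≤ p ∧ p ≤ N / 2 ∧ feasible N p x ∧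
        μ = (∑ l ∈ Finset.Icc 1 (N - 1), x l) / ((N : ℝ) - 1)}
      = sSup {v : ℝ | ∃ Nt : ℕ, 5 ≤ Nt ∧ v = alpha Nt / (Nt : ℝ)} := by
  have hBbdd : BddAbove {v : ℝ | ∃ Nt : ℕ, 5 ≤ Nt ∧ v = alpha Nt / (Nt : ℝ)} := by
    refine ⟨1, ?_⟩
    rintro v ⟨n, hn, rfl⟩
    exact div_le_one_of_le₀ (alpha_le n hn) (by positivity)
  have hle : ∀ μ ∈ {μ : ℝ | ∃ (N p : ℕ) (x : ℕ → ℝ), 2 ≤ N ∧ 1 ≤ p ∧ p ≤ N / 2 ∧ feasible N p x ∧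
        μ = (∑ l ∈ Finset.Icc 1 (N - 1), x l) / ((N : ℝ) - 1)},
      μ ≤ sSup {v : ℝ | ∃ Nt : ℕ, 5 ≤ Nt ∧ v = alpha Nt / (Nt : ℝ)} := by
    rintro μ ⟨N, p, x, hN, hp, hpN, hx, rfl⟩
    obtain ⟨n, hn, h⟩ := upper N p x hN hp hpN hx
    exact h.trans (le_csSup hBbdd ⟨n, hn, rfl⟩)
  apply le_antisymm
  · apply csSup_le _ hle
    obtain ⟨N, p, x, hN, hp, hpN, hx, -⟩ := lower 5 le_rfl 1 one_pos
    exact ⟨_, N, p, x, hN, hp, hpN, hx, rfl⟩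
  · refine csSup_le ⟨_, 5, le_rfl, rfl⟩ ?_
    rintro v ⟨n, hn, rfl⟩
    apply le_of_forall_pos_sub_le
    intro ε hε
    obtain ⟨N, p, x, hN, hp, hpN, hx, h⟩ := lower n hn ε hε
    exact h.trans (le_csSup ⟨_, hle⟩ ⟨N, p, x, hN, hp, hpN, hx, rfl⟩)
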